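/- Let h2 be a nonzero real number. For all probability measures μ and ν on ℝ, if μ.bind(v ↦ N(h2·v, 1)) = ν.bind(v ↦ N(h2·v, 1)), then μ = ν. In words: the Gaussian channel v ↦ N(h2·v,1) with nonzero gain h2 acts injectively on input distributions, so equal output laws of the relay-to-destination channel force equal laws of the forwarded symbols. -/

import Mathlib

open MeasureTheory ProbabilityTheory

/-- The output law of the Gaussian channel is the convolution of the scaled input law with the
standard Gaussian. -/
lemma bind_gaussianReal_const_mul_eq_conv (c : ℝ) (v : NNReal) (μ : Measure ℝ) :
    μ.bind (fun x => gaussianReal (c * x) v) =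
      (μ.map (c * ·)).conv (gaussianReal 0 v) := by
  have hm : Measurable fun x : ℝ => gaussianReal (c * x) v :=
    measurable_gaussianReal.comp (f := fun x : ℝ => (c * x, v)) (by fun_prop)
  ext s hs
  have hind : Measurable (s.indicator (1 : ℝ → ENNReal)) := measurable_one.indicator hs
  have hint : Measurable fun x : ℝ => ∫⁻ y, s.indicator 1 (x + y) ∂gaussianReal 0 v :=
    Measurable.lintegral_prod_right' (hind.comp measurable_add)
  rw [Measure.bind_apply hs hm.aemeasurable, ← lintegral_indicator_one hs,
    Measure.lintegral_conv hind,
    lintegral_map hint (by fun_prop)]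
  refine lintegral_congr fun x => ?_
  rw [← lintegral_map hind (measurable_const_add (c * x)), gaussianReal_map_const_add, zero_add,
    lintegral_indicator_one hs]

/-- Convolution with a real Gaussian is injective on finite measures. -/
lemma eq_of_conv_gaussianReal_eq {μ ν : Measure ℝ} [IsFiniteMeasure μ] [IsFiniteMeasure ν]
    {m : ℝ} {v : NNReal} (h : μ.conv (gaussianReal m v) = ν.conv (gaussianReal m v)) :
    μ = ν := by
  refine Measure.ext_of_charFun (funext fun t => ?_)
  have ht := congrArg (fun ρ => charFun ρ t) h
  simp only [charFun_conv, charFun_gaussianReal] at ht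
  exact mul_right_cancel₀ (Complex.exp_ne_zero _) ht

/-- **Injectivity of the Gaussian channel with nonzero gain on input laws.**
For `h2 ≠ 0`, if two probability measures `μ, ν` on `ℝ` produce the same output law
through the channel `v ↦ N(h2⬝v, 1)`, then `μ = ν`. -/
theorem gaussian_channel_injective (h2 : ℝ) (hh2 : h2 ≠ 0)
    (μ ν : Measure ℝ) [IsProbabilityMeasure μ] [IsProbabilityMeasure ν]
    (h : μ.bind (fun v => gaussianReal (h2 * v) 1) =
         ν.bind (fun v => gaussianReal (h2 * v) 1)) :
    μ = ν := by
  simp only [bind_gaussianReal_const_mul_eq_conv] at h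
  exact (measurableEmbedding_mulLeft₀ hh2).map_injective (eq_of_conv_gaussianReal_eq h)
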